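/- arXiv:2603.02533 — 2 statements merged into one kernel-verified Lean document; each statement's English description precedes it below -/
import Mathlib

section
/- Let γ ≥ 0, let S be a finite set with |S| ≥ 2, and let P : S → ℝ satisfy P(x) > 0 for all x ∈ S and ∑_{x∈S} P(x) = 1. Suppose α > 0 and Q* : S → ℝ satisfy 0 < Q*(x) < 1, L'_γ(Q*(x)) = -α/P(x) for all x ∈ S, and ∑_{x∈S} Q*(x) = 1. Then for all x₁, x₂ ∈ S, P(x₁) ≥ P(x₂) implies Q*(x₁) ≥ Q*(x₂). -/
/-!
Multiplying and dividing by `1 - p` turns the derivative of the focal loss into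
`L'_γ(p) = -(1 - p)^γ (γ · log p / (p - 1) + 1 / p)`. For `γ ≥ 0` both factors are now positive on
`(0, 1)`; the first is antitone and the second strictly antitone, because `log p / (p - 1)` is the
slope of the concave function `log` between `1` and `p`. Hence `L'_γ` is strictly increasing, as is
`t ↦ -α / t` on `(0, ∞)`, so the equation `L'_γ(q) = -α / t` makes `q` strictly increasing in `t`.
-/

/-- The closed form of the first derivative of the focal-loss,
`L'_γ(p) = -(1-p)^(γ-1) (γ log(1/p) + (1-p)/p)`. -/
noncomputable def focalLossDeriv (γ p : ℝ) : ℝ :=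
  -((1 - p) ^ (γ - 1) * (γ * Real.log (1 / p) + (1 - p) / p))

open Set Real

theorem focalLossDeriv_eq_neg_rpow_mul_slope_log {p : ℝ} (hp : p < 1) (γ : ℝ) :
    focalLossDeriv γ p = -((1 - p) ^ γ * (γ * slope log 1 p + 1 / p)) := by
  have hp' : 1 - p ≠ 0 := (sub_pos.2 hp).ne'
  have hslope : slope log 1 p = log (1 / p) / (1 - p) := by
    rw [slope_def_field, log_one, sub_zero, one_div, log_inv, neg_div, ← div_neg, neg_sub]
  rw [focalLossDeriv, hslope, rpow_sub_one hp']
  field_simp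

theorem slope_log_one_pos {p : ℝ} (hp₀ : 0 < p) (hp₁ : p ≠ 1) : 0 < slope log 1 p :=
  strictMonoOn_log.slope_pos (mem_Ioi.2 one_pos) (mem_Ioi.2 hp₀) hp₁.symm

theorem antitoneOn_slope_log_one : AntitoneOn (slope log 1) (Ioi 0 \ {1}) :=
  strictConcaveOn_log_Ioi.concaveOn.slope_anti (mem_Ioi.2 one_pos)

theorem strictMonoOn_focalLossDeriv {γ : ℝ} (hγ : 0 ≤ γ) :
    StrictMonoOn (focalLossDeriv γ) (Ioo 0 1) := by
  rintro p ⟨hp₀, hp₁⟩ q ⟨hq₀, hq₁⟩ hpq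
  rw [focalLossDeriv_eq_neg_rpow_mul_slope_log hp₁, focalLossDeriv_eq_neg_rpow_mul_slope_log hq₁,
    neg_lt_neg_iff]
  have hpow : (1 - q) ^ γ ≤ (1 - p) ^ γ :=
    rpow_le_rpow (sub_nonneg.2 hq₁.le) (sub_le_sub_left hpq.le 1) hγ
  have hpow_pos : 0 < (1 - p) ^ γ := rpow_pos_of_pos (sub_pos.2 hp₁) γ
  have hslope : slope log 1 q ≤ slope log 1 p :=
    antitoneOn_slope_log_one ⟨hp₀, hp₁.ne⟩ ⟨hq₀, hq₁.ne⟩ hpq.le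
  have hsum : γ * slope log 1 q + 1 / q < γ * slope log 1 p + 1 / p :=
    add_lt_add_of_le_of_lt (mul_le_mul_of_nonneg_left hslope hγ)
      (one_div_lt_one_div_of_lt hp₀ hpq)
  have hsum_nonneg : 0 ≤ γ * slope log 1 q + 1 / q :=
    add_nonneg (mul_nonneg hγ (slope_log_one_pos hq₀ hq₁.ne).le) (one_div_nonneg.2 hq₀.le)
  exact mul_lt_mul' hpow hsum hsum_nonneg hpow_pos

theorem focalEntropy_minimizer_order_preserving_general {ι : Type*} {γ : ℝ} (hγ : 0 ≤ γ)
    {P : ι → ℝ} (hP : ∀ x, 0 < P x) {α : ℝ} (hα : 0 < α) {Q : ι → ℝ}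
    (hQ : ∀ x, Q x ∈ Ioo 0 1) (hderiv : ∀ x, focalLossDeriv γ (Q x) = -α / P x) (x₁ x₂ : ι) :
    Q x₂ ≤ Q x₁ ↔ P x₂ ≤ P x₁ := by
  rw [← (strictMonoOn_focalLossDeriv hγ).le_iff_le (hQ x₂) (hQ x₁), hderiv, hderiv, neg_div,
    neg_div, neg_le_neg_iff, div_le_div_iff_of_pos_left hα (hP x₁) (hP x₂)]

/-- the focal-entropy minimizer preserves the ordering of
probabilities: `P x₁ ≥ P x₂` implies `Q* x₁ ≥ Q* x₂`. -/
theorem focalEntropy_minimizer_order_preserving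
    {ι : Type*} [Fintype ι] (hcard : 2 ≤ Fintype.card ι)
    (γ : ℝ) (hγ : 0 ≤ γ)
    (P : ι → ℝ) (hP : ∀ x, 0 < P x) (hPsum : ∑ x, P x = 1)
    (α : ℝ) (hα : 0 < α)
    (Qstar : ι → ℝ)
    (hQstar : ∀ x, 0 < Qstar x ∧ Qstar x < 1 ∧
      focalLossDeriv γ (Qstar x) = -α / P x)
    (hQstarsum : ∑ x, Qstar x = 1) :
    ∀ x₁ x₂ : ι, P x₂ ≤ P x₁ → Qstar x₂ ≤ Qstar x₁ :=
  fun x₁ x₂ ↦ (focalEntropy_minimizer_order_preserving_general hγ hP hα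
    (fun x ↦ ⟨(hQstar x).1, (hQstar x).2.1⟩) (fun x ↦ (hQstar x).2.2) x₁ x₂).2
end

section
/- Let γ ≥ 0, let S be a nonempty finite set, and let P : S → ℝ satisfy P(x) > 0 for all x ∈ S and ∑_{x∈S} P(x) = 1. Let m₀ be the infimum over all Q : S → ℝ with 0 < Q(x) ≤ 1 and ∑_{x∈S} Q(x) = 1 of H_0(P,Q) = ∑_{x∈S} P(x)·log(1/Q(x)), and let m_γ be the infimum over the same set of Q of H_γ(P,Q) = ∑_{x∈S} P(x)·(1-Q(x))^γ·log(1/Q(x)). Then 0 ≤ m₀ − m_γ ≤ e^(1/e) · γ. -/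
/-!
Differences of focal losses are controlled pointwise: from `1 - x ^ s ≤ -s log x` one gets
`(1 - (1 - q) ^ s) log (1 / q) ≤ s log q log (1 - q)`, and `log q log (1 - q) ≤ 1` because
`-log q ≤ (1 - q) / q` while `-log (1 - q) ≤ q / (1 - q)`. Averaging against a
probability vector `P`, the focal-entropy is antitone and `1`-Lipschitz in `γ ≥ 0`, uniformly in
`Q`, and both properties pass to infima. The constant `1` is at most `e ^ (1 / e)`.
-/

open Set

lemma sInf_image_sub_sInf_image_mem_Icc {α M : Type*} [AddCommGroup M]
    [ConditionallyCompleteLattice M] [IsOrderedAddMonoid M] {f g : α → M} {A : Set α} {c : M}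
    (hA : A.Nonempty) (hg : BddBelow (g '' A)) (hgf : ∀ a ∈ A, g a ≤ f a)
    (hfg : ∀ a ∈ A, f a ≤ g a + c) :
    sInf (f '' A) - sInf (g '' A) ∈ Icc 0 c := by
  have hle : ∀ a ∈ A, sInf (g '' A) ≤ f a := fun a ha =>
    (csInf_le hg (mem_image_of_mem g ha)).trans (hgf a ha)
  have hf : BddBelow (f '' A) := ⟨_, forall_mem_image.2 hle⟩
  refine ⟨sub_nonneg.2 (le_csInf (hA.image f) (forall_mem_image.2 hle)), sub_le_comm.1 ?_⟩
  refine le_csInf (hA.image g) (forall_mem_image.2 fun a ha => sub_le_iff_le_add.2 ?_)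
  exact (csInf_le hf (mem_image_of_mem f ha)).trans (hfg a ha)

lemma one_sub_rpow_le_neg_mul_log {x : ℝ} (hx : 0 < x) (s : ℝ) :
    1 - x ^ s ≤ -(s * Real.log x) := by
  have h := Real.one_sub_inv_le_log_of_pos (Real.rpow_pos_of_pos hx (-s))
  rwa [Real.log_rpow hx, Real.rpow_neg hx.le, inv_inv, neg_mul] at h

lemma log_mul_log_one_sub_le_one {q : ℝ} (hq₀ : 0 < q) (hq₁ : q < 1) :
    Real.log q * Real.log (1 - q) ≤ 1 := by
  have hq₁' : 0 < 1 - q := sub_pos.2 hq₁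
  have hlog : -Real.log q ≤ (1 - q) / q := by
    rw [sub_div, div_self hq₀.ne', one_div]
    linarith [Real.one_sub_inv_le_log_of_pos hq₀]
  have hlog' : -Real.log (1 - q) ≤ q / (1 - q) := by
    have hdiv : q / (1 - q) = (1 - q)⁻¹ - 1 := by field_simp; ring
    linarith [Real.one_sub_inv_le_log_of_pos hq₁']
  calc Real.log q * Real.log (1 - q) = -Real.log q * -Real.log (1 - q) := (neg_mul_neg _ _).symm
    _ ≤ (1 - q) / q * (q / (1 - q)) :=
        mul_le_mul hlog hlog'
          (neg_nonneg.2 (Real.log_nonpos hq₁'.le (sub_le_self 1 hq₀.le))) (by positivity)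
    _ = 1 := by field_simp

/-- The focal loss with focusing parameter `γ` of assigning probability `q` to the observed
outcome; `γ = 0` is the logarithmic loss. -/
noncomputable def focalLoss (γ q : ℝ) : ℝ := (1 - q) ^ γ * Real.log (1 / q)

section FocalLoss

variable {q : ℝ}

lemma focalLoss_zero (q : ℝ) : focalLoss 0 q = Real.log (1 / q) := by
  rw [focalLoss, Real.rpow_zero, one_mul]

lemma focalLoss_one (γ : ℝ) : focalLoss γ 1 = 0 := by
  rw [focalLoss, div_one, Real.log_one, mul_zero]

lemma log_one_div_nonneg (hq : q ∈ Ioc 0 1) : 0 ≤ Real.log (1 / q) :=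
  Real.log_nonneg (one_le_one_div hq.1 hq.2)

lemma focalLoss_nonneg (γ : ℝ) (hq : q ∈ Ioc 0 1) : 0 ≤ focalLoss γ q :=
  mul_nonneg (Real.rpow_nonneg (sub_nonneg.2 hq.2) γ) (log_one_div_nonneg hq)

lemma antitone_focalLoss (hq : q ∈ Ioc 0 1) : Antitone fun γ => focalLoss γ q := by
  intro β γ hβγ
  rcases hq.2.eq_or_lt with rfl | hq₁
  · simp only [focalLoss_one, le_refl]
  · exact mul_le_mul_of_nonneg_right
      (Real.rpow_le_rpow_of_exponent_ge (sub_pos.2 hq₁) (sub_le_self 1 hq.1.le) hβγ)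
      (log_one_div_nonneg hq)

lemma focalLoss_le_focalLoss_add_sub {β γ : ℝ} (hβ : 0 ≤ β) (hβγ : β ≤ γ) (hq : q ∈ Ioc 0 1) :
    focalLoss β q ≤ focalLoss γ q + (γ - β) := by
  rcases hq.2.eq_or_lt with rfl | hq₁
  · simpa only [focalLoss_one, zero_add, sub_nonneg] using hβγ
  have hq₁' : 0 < 1 - q := sub_pos.2 hq₁
  have hfactor : (1 - q) ^ γ = (1 - q) ^ β * (1 - q) ^ (γ - β) := by
    rw [← Real.rpow_add hq₁', add_sub_cancel]
  have hgap : (1 - (1 - q) ^ (γ - β)) * Real.log (1 / q) ≤ γ - β :=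
    calc (1 - (1 - q) ^ (γ - β)) * Real.log (1 / q)
        ≤ -((γ - β) * Real.log (1 - q)) * Real.log (1 / q) :=
          mul_le_mul_of_nonneg_right (one_sub_rpow_le_neg_mul_log hq₁' _) (log_one_div_nonneg hq)
      _ = (γ - β) * (Real.log q * Real.log (1 - q)) := by rw [one_div, Real.log_inv]; ring
      _ ≤ γ - β :=
          mul_le_of_le_one_right (sub_nonneg.2 hβγ) (log_mul_log_one_sub_le_one hq.1 hq₁)
  rw [← sub_le_iff_le_add']
  calc focalLoss β q - focalLoss γ q
      = (1 - q) ^ β * ((1 - (1 - q) ^ (γ - β)) * Real.log (1 / q)) := by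
        rw [focalLoss, focalLoss, hfactor]; ring
    _ ≤ (1 - q) ^ β * (γ - β) := mul_le_mul_of_nonneg_left hgap (Real.rpow_nonneg hq₁'.le β)
    _ ≤ γ - β := mul_le_of_le_one_left (sub_nonneg.2 hβγ)
        (Real.rpow_le_one hq₁'.le (sub_le_self 1 hq.1.le) hβ)

end FocalLoss

/-- The focal-entropy `H_γ(P, Q)`: the `P`-weighted sum of the focal losses of `Q`. The weights
need not be normalized. -/
noncomputable def focalEntropy {ι : Type*} [Fintype ι] (γ : ℝ) (P Q : ι → ℝ) : ℝ :=
  ∑ x, P x * focalLoss γ (Q x)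

section FocalEntropy

variable {ι : Type*} [Fintype ι] {β γ : ℝ} {P Q : ι → ℝ}

lemma focalEntropy_eq_sum (γ : ℝ) (P Q : ι → ℝ) :
    focalEntropy γ P Q = ∑ x, P x * (1 - Q x) ^ γ * Real.log (1 / Q x) := by
  simp only [focalEntropy, focalLoss, mul_assoc]

lemma focalEntropy_zero (P Q : ι → ℝ) :
    focalEntropy 0 P Q = ∑ x, P x * Real.log (1 / Q x) := by
  simp only [focalEntropy, focalLoss_zero]

lemma focalEntropy_nonneg (γ : ℝ) (hP : 0 ≤ P) (hQ : ∀ x, Q x ∈ Ioc 0 1) :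
    0 ≤ focalEntropy γ P Q :=
  Finset.sum_nonneg fun x _ => mul_nonneg (hP x) (focalLoss_nonneg γ (hQ x))

lemma antitone_focalEntropy (hP : 0 ≤ P) (hQ : ∀ x, Q x ∈ Ioc 0 1) :
    Antitone fun γ => focalEntropy γ P Q := fun _ _ hβγ =>
  Finset.sum_le_sum fun x _ => mul_le_mul_of_nonneg_left (antitone_focalLoss (hQ x) hβγ) (hP x)

lemma focalEntropy_le_focalEntropy_add_sub_mul_sum (hβ : 0 ≤ β) (hβγ : β ≤ γ) (hP : 0 ≤ P)
    (hQ : ∀ x, Q x ∈ Ioc 0 1) :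
    focalEntropy β P Q ≤ focalEntropy γ P Q + (γ - β) * ∑ x, P x :=
  calc focalEntropy β P Q
      ≤ ∑ x, P x * (focalLoss γ (Q x) + (γ - β)) := Finset.sum_le_sum fun x _ =>
        mul_le_mul_of_nonneg_left (focalLoss_le_focalLoss_add_sub hβ hβγ (hQ x)) (hP x)
    _ = focalEntropy γ P Q + (γ - β) * ∑ x, P x := by
        simp only [focalEntropy, mul_add, Finset.sum_add_distrib, ← Finset.sum_mul, mul_comm]

theorem inf_crossEntropy_sub_inf_focalEntropy_bounds_general {A : Set (ι → ℝ)} (hβ : 0 ≤ β)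
    (hβγ : β ≤ γ) (hP : 0 ≤ P) (hA : A.Nonempty) (hQ : ∀ Q ∈ A, ∀ x, Q x ∈ Ioc 0 1) :
    sInf (focalEntropy β P '' A) - sInf (focalEntropy γ P '' A) ∈
      Icc 0 ((γ - β) * ∑ x, P x) :=
  sInf_image_sub_sInf_image_mem_Icc hA
    ⟨0, forall_mem_image.2 fun Q hQA => focalEntropy_nonneg γ hP (hQ Q hQA)⟩
    (fun Q hQA => antitone_focalEntropy hP (hQ Q hQA) hβγ)
    (fun Q hQA => focalEntropy_le_focalEntropy_add_sub_mul_sum hβ hβγ hP (hQ Q hQA))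

end FocalEntropy

/-- the difference between the infimum of the cross-entropy and the
infimum of the focal-entropy (over probability vectors `Q` with `0 < Q x ≤ 1`)
satisfies `0 ≤ m₀ − m_γ ≤ e^(1/e) γ`. -/
theorem inf_crossEntropy_sub_inf_focalEntropy_bounds
    {ι : Type*} [Fintype ι] [Nonempty ι] (γ : ℝ) (hγ : 0 ≤ γ)
    (P : ι → ℝ) (hP : ∀ x, 0 < P x) (hPsum : ∑ x, P x = 1) :
    0 ≤ sInf ((fun Q : ι → ℝ => ∑ x, P x * Real.log (1 / Q x)) ''
          {Q | (∀ x, 0 < Q x ∧ Q x ≤ 1) ∧ ∑ x, Q x = 1}) -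
        sInf ((fun Q : ι → ℝ => ∑ x, P x * (1 - Q x) ^ γ * Real.log (1 / Q x)) ''
          {Q | (∀ x, 0 < Q x ∧ Q x ≤ 1) ∧ ∑ x, Q x = 1}) ∧
    sInf ((fun Q : ι → ℝ => ∑ x, P x * Real.log (1 / Q x)) ''
          {Q | (∀ x, 0 < Q x ∧ Q x ≤ 1) ∧ ∑ x, Q x = 1}) -
        sInf ((fun Q : ι → ℝ => ∑ x, P x * (1 - Q x) ^ γ * Real.log (1 / Q x)) ''
          {Q | (∀ x, 0 < Q x ∧ Q x ≤ 1) ∧ ∑ x, Q x = 1}) ≤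
      Real.exp (1 / Real.exp 1) * γ := by
  simp only [← focalEntropy_eq_sum]
  simp only [← focalEntropy_zero]
  have hP_mem : P ∈ stdSimplex ℝ ι := ⟨fun x => (hP x).le, hPsum⟩
  have hbounds := inf_crossEntropy_sub_inf_focalEntropy_bounds_general le_rfl hγ hP_mem.1
    (A := {Q | (∀ x, 0 < Q x ∧ Q x ≤ 1) ∧ ∑ x, Q x = 1})
    ⟨P, fun x => ⟨hP x, (mem_Icc_of_mem_stdSimplex hP_mem x).2⟩, hPsum⟩ fun _ hQ => hQ.1
  rw [hPsum, sub_zero, mul_one] at hbounds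
  have hconst : 1 ≤ Real.exp (1 / Real.exp 1) := Real.one_le_exp (by positivity)
  exact ⟨hbounds.1, hbounds.2.trans (le_mul_of_one_le_left hγ hconst)⟩
end
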